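/- Let C be a super-coalgebra (ℤ₂-graded coalgebra) over a field k of characteristic ≠ 2, and let ℤ₂ ⋉ C denote the smash coproduct coalgebra on kℤ₂ ⊗ C with Δ(i⊗c) = Σ (i⊗c₍₁₎) ⊗ ((|c₍₁₎|+i)⊗c₍₂₎) and ε(i⊗c) = ε(c). Then ℤ₂ ⋉ Corad C = Corad(ℤ₂ ⋉ C), i.e. the smash coproduct of ℤ₂ with the coradical of C equals the coradical of the smash coproduct ℤ₂ ⋉ C. -/

import Mathlib

/-!
A subspace `D` of a coalgebra is a subcoalgebra exactly when it is stable under the left and right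
actions of all functionals (`isSubcoalgebraOf_iff`), so the coradical is the socle of the coalgebra
as a bimodule over its dual. Both sides of the theorem are thus socles.

For `H = ℤ₂ ⋉ C` the bimodule structure is generated by the functionals pulled back from `C` along
the coalgebra morphism `i ⊗ c ↦ c`, together with two commuting involutions, `i ⊗ c ↦ (-1)^i i ⊗ c`
and `i ⊗ c ↦ (-1)^|c| i ⊗ c` (`isSubcoalgebraOf_smash_iff`). Each involution normalises the
remaining operators. Adjoining such an involution does not change the socle (`opSocle_insert`): one
inclusion is Clifford's theorem, the other is Maschke's theorem and uses `2 ≠ 0`. Hence the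
coradical of `H` is its socle as a bimodule over the dual of `C` alone.

As such a bimodule, `H` is the direct sum of `{0 ⊗ c + 1 ⊗ c}`, a copy of `C`, and
`{0 ⊗ c - 1 ⊗ c}`, a copy of `C` whose right-hand action is twisted by the parity automorphism.
The twist permutes the operators and does not affect the socle. So the socle of `H` consists of the
elements `0 ⊗ a + 1 ⊗ b` with `a` and `b` in the coradical of `C` (`mem_opSocle_foldOps`).
-/


open TensorProduct CategoryTheory

noncomputable section

/-- A subspace `D` of a coalgebra with comultiplication `Δ` is a subcoalgebra
if `Δ(D) ⊆ D ⊗ D`. -/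
def IsSubcoalgebraOf {k M : Type} [Field k] [AddCommGroup M] [Module k M]
    (Δ : M →ₗ[k] M ⊗[k] M) (D : Submodule k M) : Prop :=
  ∀ a ∈ D, Δ a ∈ LinearMap.range (TensorProduct.map D.subtype D.subtype)

/-- The coradical of a coalgebra: the sum of all its simple subcoalgebras. -/
def coradicalOf {k M : Type} [Field k] [AddCommGroup M] [Module k M]
    (Δ : M →ₗ[k] M ⊗[k] M) : Submodule k M :=
  sSup {D | IsSubcoalgebraOf Δ D ∧ D ≠ ⊥ ∧
    ∀ E : Submodule k M, E ≤ D → IsSubcoalgebraOf Δ E → E = ⊥ ∨ E = D}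

/-- A super-coalgebra (`ℤ₂`-graded coalgebra) over `k`, presented via even/odd
projection operators. -/
structure SuperCoalgebra (k : Type) [Field k] : Type 1 where
  carrier : Type
  [acg : AddCommGroup carrier]
  [mod : Module k carrier]
  pe : carrier →ₗ[k] carrier
  po : carrier →ₗ[k] carrier
  pe_add_po : ∀ a, pe a + po a = a
  pe_po : ∀ a, pe (po a) = 0
  po_pe : ∀ a, po (pe a) = 0
  comul : carrier →ₗ[k] carrier ⊗[k] carrier
  counit : carrier →ₗ[k] k
  coassoc : ∀ a, (TensorProduct.assoc k carrier carrier carrier)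
      ((TensorProduct.map comul LinearMap.id) (comul a)) =
      (TensorProduct.map LinearMap.id comul) (comul a)
  counit_comul : ∀ a,
    (TensorProduct.lid k carrier) ((TensorProduct.map counit LinearMap.id) (comul a)) = a
  comul_counit : ∀ a,
    (TensorProduct.rid k carrier) ((TensorProduct.map LinearMap.id counit) (comul a)) = a
  comul_even : ∀ a, po a = 0 →
    comul a = TensorProduct.map pe pe (comul a) + TensorProduct.map po po (comul a)
  comul_odd : ∀ a, pe a = 0 →
    comul a = TensorProduct.map pe po (comul a) + TensorProduct.map po pe (comul a)
  counit_odd : ∀ a, pe a = 0 → counit a = 0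

attribute [instance] SuperCoalgebra.acg SuperCoalgebra.mod

namespace SuperCoalgebra

variable {k : Type} [Field k] (C : SuperCoalgebra k)

/-- the homogeneous projection indexed by `ZMod 2`. -/
def parityProj (p : ZMod 2) : C.carrier →ₗ[k] C.carrier :=
  if p = 0 then C.pe else C.po

/-- The carrier `kℤ₂ ⊗ C ≅ (ZMod 2 → C)` of the smash coproduct `ℤ₂ ⋉ C`,
with `i ⊗ c` corresponding to the function supported at `i` with value `c`. -/
abbrev Smash := ZMod 2 → C.carrier

/-- The comultiplication of the smash coproduct `ℤ₂ ⋉ C`: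
`Δ(i⊗c) = Σ (i ⊗ c₍₁₎) ⊗ ((|c₍₁₎| + i) ⊗ c₍₂₎)`. -/
def smashComul : (ZMod 2 → C.carrier) →ₗ[k] (ZMod 2 → C.carrier) ⊗[k] (ZMod 2 → C.carrier) :=
  ∑ i : ZMod 2, ∑ p : ZMod 2,
    (TensorProduct.map
        (LinearMap.single k (fun _ : ZMod 2 => C.carrier) i ∘ₗ C.parityProj p)
        (LinearMap.single k (fun _ : ZMod 2 => C.carrier) (p + i))) ∘ₗ
      C.comul ∘ₗ LinearMap.proj i

/-- The counit of the smash coproduct `ℤ₂ ⋉ C`: `ε(i⊗c) = ε(c)`. -/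
def smashCounit : (ZMod 2 → C.carrier) →ₗ[k] k :=
  ∑ i : ZMod 2, C.counit ∘ₗ LinearMap.proj i

end SuperCoalgebra

/-! ### Socles of spaces with operators -/

section Socle

variable {k V W : Type} [Field k] [AddCommGroup V] [Module k V] [AddCommGroup W] [Module k W]

/-- The subspace `D` is invariant under every operator in `S`. -/
def StableUnder (S : Set (V →ₗ[k] V)) (D : Submodule k V) : Prop :=
  ∀ f ∈ S, ∀ d ∈ D, f d ∈ D

/-- `D` is minimal among the nonzero `S`-stable subspaces, i.e. a simple module over the algebra
generated by `S`. -/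
def IsMinStable (S : Set (V →ₗ[k] V)) (D : Submodule k V) : Prop :=
  StableUnder S D ∧ D ≠ ⊥ ∧ ∀ E : Submodule k V, E ≤ D → StableUnder S E → E = ⊥ ∨ E = D

/-- The socle of `V` as a module over the algebra generated by `S`. -/
def opSocle (S : Set (V →ₗ[k] V)) : Submodule k V := sSup {D | IsMinStable S D}

lemma IsMinStable.le_opSocle {S : Set (V →ₗ[k] V)} {D : Submodule k V} (h : IsMinStable S D) :
    D ≤ opSocle S := le_sSup h

lemma StableUnder.inf {S : Set (V →ₗ[k] V)} {D E : Submodule k V} (hD : StableUnder S D)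
    (hE : StableUnder S E) : StableUnder S (D ⊓ E) :=
  fun f hf d hd => ⟨hD f hf d hd.1, hE f hf d hd.2⟩

lemma StableUnder.sup {S : Set (V →ₗ[k] V)} {D E : Submodule k V} (hD : StableUnder S D)
    (hE : StableUnder S E) : StableUnder S (D ⊔ E) := by
  intro f hf d hd
  obtain ⟨x, hx, y, hy, rfl⟩ := Submodule.mem_sup.1 hd
  rw [map_add]
  exact Submodule.add_mem_sup (hD f hf x hx) (hE f hf y hy)

lemma stableUnder_insert {S : Set (V →ₗ[k] V)} {g : V →ₗ[k] V} {D : Submodule k V} :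
    StableUnder (insert g S) D ↔ (∀ d ∈ D, g d ∈ D) ∧ StableUnder S D := by
  simp [StableUnder]

lemma StableUnder.map {S : Set (V →ₗ[k] V)} {T : Set (W →ₗ[k] W)} {f : V →ₗ[k] W}
    (hT : ∀ t ∈ T, ∃ s ∈ S, ∀ v, t (f v) = f (s v)) {D : Submodule k V} (hD : StableUnder S D) :
    StableUnder T (D.map f) := by
  rintro t ht _ ⟨d, hd, rfl⟩
  obtain ⟨s, hs, h⟩ := hT t ht
  exact ⟨s d, hD s hs d hd, (h d).symm⟩

/-- The image of a simple module under a semilinear map (the operators are matched up by an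
arbitrary relation, in both directions) is zero or simple. -/
lemma IsMinStable.map {S : Set (V →ₗ[k] V)} {T : Set (W →ₗ[k] W)} {f : V →ₗ[k] W}
    (hT : ∀ t ∈ T, ∃ s ∈ S, ∀ v, t (f v) = f (s v))
    (hS : ∀ s ∈ S, ∃ t ∈ T, ∀ v, f (s v) = t (f v)) {D : Submodule k V} (hD : IsMinStable S D) :
    D.map f = ⊥ ∨ IsMinStable T (D.map f) := by
  refine or_iff_not_imp_left.2 fun h0 => ⟨hD.1.map hT, h0, fun E hE hEs => ?_⟩
  have hst : StableUnder S (D ⊓ E.comap f) := by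
    intro s hs d hd
    obtain ⟨t, ht, h⟩ := hS s hs
    refine ⟨hD.1 s hs d hd.1, ?_⟩
    change f (s d) ∈ E
    rw [h]
    exact hEs t ht _ hd.2
  rcases hD.2.2 _ inf_le_left hst with h | h
  · left
    rw [eq_bot_iff]
    intro e he
    obtain ⟨d, hd, rfl⟩ := hE he
    have : d ∈ D ⊓ E.comap f := ⟨hd, he⟩
    rw [h, Submodule.mem_bot] at this
    simp [this]
  · right
    refine le_antisymm hE (Submodule.map_le_iff_le_comap.2 ?_)
    rw [← h]
    exact inf_le_right

lemma opSocle_map {S : Set (V →ₗ[k] V)} {T : Set (W →ₗ[k] W)} {f : V →ₗ[k] W}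
    (hT : ∀ t ∈ T, ∃ s ∈ S, ∀ v, t (f v) = f (s v))
    (hS : ∀ s ∈ S, ∃ t ∈ T, ∀ v, f (s v) = t (f v)) {v : V} (hv : v ∈ opSocle S) :
    f v ∈ opSocle T := by
  suffices h : opSocle S ≤ (opSocle T).comap f from h hv
  refine sSup_le fun D hD => Submodule.map_le_iff_le_comap.1 ?_
  rcases hD.map hT hS with h | h
  · simp [h]
  · exact h.le_opSocle

/-! ### Adjoining an involution -/

section Involution

variable {S : Set (V →ₗ[k] V)} {g : V →ₗ[k] V}

lemma conj_left (hg : ∀ v, g (g v) = v) (hgS : ∀ s ∈ S, ∃ t ∈ S, ∀ v, g (s (g v)) = t v) :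
    ∀ t ∈ S, ∃ s ∈ S, ∀ v, t (g v) = g (s v) := by
  intro t ht
  obtain ⟨s, hs, h⟩ := hgS t ht
  exact ⟨s, hs, fun v => by rw [← h, hg]⟩

lemma conj_right (hg : ∀ v, g (g v) = v) (hgS : ∀ s ∈ S, ∃ t ∈ S, ∀ v, g (s (g v)) = t v) :
    ∀ s ∈ S, ∃ t ∈ S, ∀ v, g (s v) = t (g v) := by
  intro s hs
  obtain ⟨t, ht, h⟩ := hgS s hs
  exact ⟨t, ht, fun v => by rw [← h, hg]⟩

lemma IsMinStable.map_inv (hg : ∀ v, g (g v) = v)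
    (hgS : ∀ s ∈ S, ∃ t ∈ S, ∀ v, g (s (g v)) = t v) {X : Submodule k V}
    (hX : IsMinStable S X) : IsMinStable S (X.map g) := by
  refine (hX.map (conj_left hg hgS) (conj_right hg hgS)).resolve_left fun h => hX.2.1 ?_
  rw [eq_bot_iff]
  intro x hx
  have : g x ∈ X.map g := ⟨x, hx, rfl⟩
  rw [h, Submodule.mem_bot] at this
  rw [Submodule.mem_bot, ← hg x, this, map_zero]

lemma stableUnder_sup_map (hg : ∀ v, g (g v) = v)
    (hgS : ∀ s ∈ S, ∃ t ∈ S, ∀ v, g (s (g v)) = t v) {X : Submodule k V}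
    (hX : StableUnder S X) : StableUnder (insert g S) (X ⊔ X.map g) := by
  refine stableUnder_insert.2 ⟨fun d hd => ?_, hX.sup (hX.map (conj_left hg hgS))⟩
  obtain ⟨x, hx, _, ⟨y, hy, rfl⟩, rfl⟩ := Submodule.mem_sup.1 hd
  rw [map_add, hg, add_comm]
  exact Submodule.add_mem_sup hy ⟨x, hx, rfl⟩

/-- Clifford's theorem for an involution `g` normalising `S`: a simple `⟨S, g⟩`-module is either
simple over `S` or of the form `X ⊕ gX` with `X` simple over `S`, so it lies in the `S`-socle. -/
lemma opSocle_insert_le (hg : ∀ v, g (g v) = v)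
    (hgS : ∀ s ∈ S, ∃ t ∈ S, ∀ v, g (s (g v)) = t v) : opSocle (insert g S) ≤ opSocle S := by
  refine sSup_le fun D hD => ?_
  obtain ⟨hDs, hD0, hDm⟩ := hD
  obtain ⟨hDg, hDS⟩ := stableUnder_insert.1 hDs
  -- a nonzero `S`-stable `Y ≤ D` satisfies `Y + gY = D`
  have key : ∀ Y ≤ D, StableUnder S Y → Y ≠ ⊥ → Y ⊔ Y.map g = D := by
    intro Y hY hYs hY0
    refine (hDm _ (sup_le hY ?_) (stableUnder_sup_map hg hgS hYs)).resolve_left fun h => hY0 ?_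
    · rintro _ ⟨y, hy, rfl⟩
      exact hDg y (hY hy)
    · exact (sup_eq_bot_iff.1 h).1
  by_cases hX : ∃ X ≤ D, StableUnder S X ∧ X ≠ ⊥ ∧ X ⊓ X.map g = ⊥
  · obtain ⟨X, hXD, hXs, hX0, hXg⟩ := hX
    have hmin : IsMinStable S X := by
      refine ⟨hXs, hX0, fun Y hY hYs => or_iff_not_imp_left.2 fun hY0 => le_antisymm hY ?_⟩
      intro x hx
      have : x ∈ Y ⊔ Y.map g := by
        rw [key Y (hY.trans hXD) hYs hY0]
        exact hXD hx
      obtain ⟨y, hy, z, hz, rfl⟩ := Submodule.mem_sup.1 this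
      have hz' : z ∈ X ⊓ X.map g :=
        ⟨by simpa using X.sub_mem hx (hY hy), Submodule.map_mono hY hz⟩
      rw [hXg, Submodule.mem_bot] at hz'
      simpa [hz'] using hy
    rw [← key X hXD hXs hX0]
    exact sup_le hmin.le_opSocle (hmin.map_inv hg hgS).le_opSocle
  · push Not at hX
    refine IsMinStable.le_opSocle ⟨hDS, hD0, fun X hXD hXs => or_iff_not_imp_left.2 fun hX0 => ?_⟩
    have hst : StableUnder (insert g S) (X ⊓ X.map g) := by
      refine stableUnder_insert.2 ⟨?_, hXs.inf (hXs.map (conj_left hg hgS))⟩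
      rintro _ ⟨hd, y, hy, rfl⟩
      exact ⟨by rwa [hg], ⟨g y, hd, rfl⟩⟩
    have := (hDm _ (inf_le_left.trans hXD) hst).resolve_left (hX X hXD hXs hX0)
    refine le_antisymm hXD ?_
    rw [← this]
    exact inf_le_left

/-- If `X` is `S`-simple with `X ∩ gX = 0`, then `X ⊕ gX` has length two over `S`, so its nonzero
`⟨S, g⟩`-submodules `Y` that do not contain `X` are simple; they also project onto `X`. -/
lemma proper_of_sup (hg : ∀ v, g (g v) = v)
    (hgS : ∀ s ∈ S, ∃ t ∈ S, ∀ v, g (s (g v)) = t v) {X : Submodule k V}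
    (hX : IsMinStable S X) (hXg : X ⊓ X.map g = ⊥) {Y : Submodule k V} (hY : Y ≤ X ⊔ X.map g)
    (hYs : StableUnder (insert g S) Y) (hY0 : Y ≠ ⊥) (hYX : ¬ X ≤ Y) :
    IsMinStable (insert g S) Y ∧ ∀ x ∈ X, ∃ x' ∈ X.map g, x + x' ∈ Y := by
  have hgX := hX.map_inv hg hgS
  have proj : ∀ Z ≤ X ⊔ X.map g, StableUnder (insert g S) Z → Z ≠ ⊥ →
      ∀ x ∈ X, ∃ x' ∈ X.map g, x + x' ∈ Z := by
    intro Z hZ hZs hZ0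
    obtain ⟨hZg, hZS⟩ := stableUnder_insert.1 hZs
    -- the projection of `Z` to `X` along `gX`
    have hst : StableUnder S (X ⊓ (Z ⊔ X.map g)) := hX.1.inf (hZS.sup hgX.1)
    rcases hX.2.2 _ inf_le_left hst with h | h
    · exfalso
      apply hZ0
      rw [eq_bot_iff, ← hXg]
      have hle : Z ≤ X.map g := by
        intro z hz
        obtain ⟨x, hx, x', hx', rfl⟩ := Submodule.mem_sup.1 (hZ hz)
        have : x ∈ X ⊓ (Z ⊔ X.map g) := by
          refine ⟨hx, ?_⟩
          have := Submodule.sub_mem _ (Submodule.mem_sup_left (T := X.map g) hz)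
            (Submodule.mem_sup_right (S := Z) hx')
          simpa using this
        rw [h, Submodule.mem_bot] at this
        simpa [this] using hx'
      refine le_inf (fun z hz => ?_) hle
      obtain ⟨x, hx, hxz⟩ := hle (hZg z hz)
      have : x = z := by rw [← hg x, hxz, hg]
      exact this ▸ hx
    · intro x hx
      rw [← h] at hx
      obtain ⟨z, hz, w, hw, rfl⟩ := Submodule.mem_sup.1 hx.2
      exact ⟨-w, neg_mem hw, by simpa using hz⟩
  obtain ⟨hYg, hYS⟩ := stableUnder_insert.1 hYs
  refine ⟨⟨hYs, hY0, fun Z hZ hZs => or_iff_not_imp_left.2 fun hZ0 => le_antisymm hZ ?_⟩,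
    proj Y hY hYs hY0⟩
  have hbot : Y ⊓ X.map g = ⊥ := by
    refine (hgX.2.2 _ inf_le_right (hYS.inf hgX.1)).resolve_right fun h => hYX fun x hx => ?_
    have : g x ∈ Y ⊓ X.map g := by rw [h]; exact ⟨x, hx, rfl⟩
    rw [← hg x]
    exact hYg _ this.1
  intro y hy
  obtain ⟨x, hx, x', hx', rfl⟩ := Submodule.mem_sup.1 (hY hy)
  obtain ⟨x'', hx'', hz⟩ := proj Z (hZ.trans hY) hZs hZ0 x hx
  have : x' - x'' ∈ Y ⊓ X.map g :=
    ⟨by simpa using sub_mem hy (hZ hz), sub_mem hx' hx''⟩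
  rw [hbot, Submodule.mem_bot, sub_eq_zero] at this
  rwa [this]

/-- Maschke's theorem for an involution `g` normalising `S`: if `X` is `S`-simple, then `X + gX`
is a sum of simple `⟨S, g⟩`-modules. In the critical case a submodule `Y` of `X ⊕ gX` is the graph
of an isomorphism `θ : X → gX`, and the graph of `-θ` is a complement because `2` is invertible. -/
lemma opSocle_le_insert (h2 : (2 : k) ≠ 0) (hg : ∀ v, g (g v) = v)
    (hgS : ∀ s ∈ S, ∃ t ∈ S, ∀ v, g (s (g v)) = t v) : opSocle S ≤ opSocle (insert g S) := by
  refine sSup_le fun X hX => ?_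
  have hgX := IsMinStable.map_inv hg hgS hX
  have hsup := stableUnder_sup_map hg hgS hX.1
  rcases hX.2.2 _ inf_le_left (hX.1.inf hgX.1) with hXg | hXg
  swap
  · -- `X = gX` is already stable under `g`
    have hst : StableUnder (insert g S) X := by
      refine stableUnder_insert.2 ⟨fun x hx => ?_, hX.1⟩
      rw [← hXg] at hx
      obtain ⟨y, hy, rfl⟩ := hx.2
      rwa [hg]
    exact IsMinStable.le_opSocle
      ⟨hst, hX.2.1, fun E hE hEs => hX.2.2 E hE (stableUnder_insert.1 hEs).2⟩
  by_cases hY : ∃ Y ≤ X ⊔ X.map g, StableUnder (insert g S) Y ∧ Y ≠ ⊥ ∧ ¬ X ≤ Y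
  swap
  · push Not at hY
    refine le_sup_left.trans (IsMinStable.le_opSocle
      ⟨hsup, fun h => hX.2.1 (sup_eq_bot_iff.1 h).1, fun E hE hEs =>
        or_iff_not_imp_left.2 fun hE0 => le_antisymm hE ?_⟩)
    have hXE := hY E hE hEs hE0
    refine sup_le hXE ?_
    rintro _ ⟨x, hx, rfl⟩
    exact (stableUnder_insert.1 hEs).1 x (hXE hx)
  obtain ⟨Y, hYle, hYs, hY0, hYX⟩ := hY
  obtain ⟨hYg, hYS⟩ := stableUnder_insert.1 hYs
  have uniq : ∀ a ∈ X, ∀ b ∈ X.map g, ∀ c ∈ X, ∀ d ∈ X.map g, a + b = c + d → a = c ∧ b = d := by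
    intro a ha b hb c hc d hd h
    have h1 : a - c = d - b := by
      rw [sub_eq_sub_iff_add_eq_add, h, add_comm]
    have h3 : a - c ∈ X ⊓ X.map g := ⟨sub_mem ha hc, h1 ▸ sub_mem hd hb⟩
    rw [hXg, Submodule.mem_bot] at h3
    exact ⟨sub_eq_zero.1 h3, (sub_eq_zero.1 (h1 ▸ h3)).symm⟩
  -- the mirror image of `Y` under the map which is `1` on `X` and `-1` on `gX`
  let Y' : Submodule k V :=
    { carrier := {v | ∃ x ∈ X, ∃ x' ∈ X.map g, x + x' ∈ Y ∧ v = x - x'}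
      add_mem' := by
        rintro _ _ ⟨x, hx, x', hx', h, rfl⟩ ⟨y, hy, y', hy', h', rfl⟩
        refine ⟨x + y, add_mem hx hy, x' + y', add_mem hx' hy', ?_, by abel⟩
        have := add_mem h h'
        rwa [add_add_add_comm] at this
      zero_mem' := ⟨0, zero_mem _, 0, zero_mem _, by simp, by simp⟩
      smul_mem' := by
        rintro c _ ⟨x, hx, x', hx', h, rfl⟩
        refine ⟨c • x, X.smul_mem c hx, c • x', Submodule.smul_mem _ c hx', ?_, smul_sub _ _ _⟩
        rw [← smul_add]
        exact Y.smul_mem c h }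
  have hY'le : Y' ≤ X ⊔ X.map g := by
    rintro _ ⟨x, hx, x', hx', -, rfl⟩
    exact sub_mem (Submodule.mem_sup_left hx) (Submodule.mem_sup_right hx')
  have hY's : StableUnder (insert g S) Y' := by
    refine stableUnder_insert.2 ⟨?_, ?_⟩
    · rintro _ ⟨x, hx, _, ⟨x', hx', rfl⟩, h, rfl⟩
      refine ⟨-x', neg_mem hx', -g x, neg_mem ⟨x, hx, rfl⟩, ?_, ?_⟩
      · have := neg_mem (hYg _ h)
        rw [map_add, hg] at this
        convert this using 1
        abel
      · rw [map_sub, hg]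
        abel
    · rintro s hs _ ⟨x, hx, x', hx', h, rfl⟩
      exact ⟨s x, hX.1 s hs x hx, s x', hgX.1 s hs x' hx', by
        rw [← map_add]; exact hYS s hs _ h, map_sub _ _ _⟩
  have hY'0 : Y' ≠ ⊥ := by
    intro h0
    apply hY0
    rw [eq_bot_iff]
    intro y hy
    obtain ⟨x, hx, x', hx', rfl⟩ := Submodule.mem_sup.1 (hYle hy)
    have : x - x' ∈ Y' := ⟨x, hx, x', hx', hy, rfl⟩
    rw [h0, Submodule.mem_bot] at this
    obtain ⟨rfl, h4⟩ := uniq x hx (-x') (neg_mem hx') 0 (zero_mem _) 0 (zero_mem _)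
      (by simpa [sub_eq_add_neg] using this)
    rw [neg_eq_zero] at h4
    simp [h4]
  have hY'X : ¬ X ≤ Y' := by
    refine fun h => hYX fun z hz => ?_
    obtain ⟨x, hx, x', hx', hy, hzx⟩ := h hz
    obtain ⟨rfl, h4⟩ := uniq z hz 0 (zero_mem _) x hx (-x') (neg_mem hx')
      (by simpa [sub_eq_add_neg] using hzx)
    have : x' = 0 := by simpa using h4.symm
    simpa [this] using hy
  obtain ⟨hYm, hYp⟩ := proper_of_sup hg hgS hX hXg hYle hYs hY0 hYX
  have hY'm := (proper_of_sup hg hgS hX hXg hY'le hY's hY'0 hY'X).1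
  intro x hx
  obtain ⟨x', hx', hy⟩ := hYp x hx
  have hy' : x - x' ∈ Y' := ⟨x, hx, x', hx', hy, rfl⟩
  have h2x : (2 : k) • x ∈ opSocle (insert g S) := by
    have := add_mem (hYm.le_opSocle hy) (hY'm.le_opSocle hy')
    rwa [add_add_sub_cancel, ← two_smul k] at this
  exact (Submodule.smul_mem_iff _ h2).1 h2x

lemma opSocle_insert (h2 : (2 : k) ≠ 0) (hg : ∀ v, g (g v) = v)
    (hgS : ∀ s ∈ S, ∃ t ∈ S, ∀ v, g (s (g v)) = t v) : opSocle (insert g S) = opSocle S :=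
  le_antisymm (opSocle_insert_le hg hgS) (opSocle_le_insert h2 hg hgS)

end Involution

end Socle

/-! ### Subcoalgebras as sub-bimodules over the dual -/

section DualAction

variable {k M N : Type} [Field k] [AddCommGroup M] [Module k M] [AddCommGroup N] [Module k N]

/-- The action `c ↦ c₍₁₎ φ(c₍₂₎)` of a functional `φ`. -/
def opL (Δ : M →ₗ[k] M ⊗[k] M) (φ : M →ₗ[k] k) : M →ₗ[k] M :=
  (TensorProduct.rid k M).toLinearMap ∘ₗ TensorProduct.map LinearMap.id φ ∘ₗ Δ

/-- The action `c ↦ φ(c₍₁₎) c₍₂₎` of a functional `φ`. -/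
def opR (Δ : M →ₗ[k] M ⊗[k] M) (φ : M →ₗ[k] k) : M →ₗ[k] M :=
  (TensorProduct.lid k M).toLinearMap ∘ₗ TensorProduct.map φ LinearMap.id ∘ₗ Δ

/-- The operators of the `M*`-bimodule `M`. -/
def dualOps (Δ : M →ₗ[k] M ⊗[k] M) : Set (M →ₗ[k] M) := Set.range (opL Δ) ∪ Set.range (opR Δ)

lemma rid_map {M' N' : Type} [AddCommGroup M'] [Module k M'] [AddCommGroup N'] [Module k N']
    (f : M →ₗ[k] M') (h : N →ₗ[k] N') (φ : N' →ₗ[k] k) (t : M ⊗[k] N) :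
    TensorProduct.rid k M' (TensorProduct.map LinearMap.id φ (TensorProduct.map f h t)) =
      f (TensorProduct.rid k M (TensorProduct.map LinearMap.id (φ ∘ₗ h) t)) := by
  induction t with
  | zero => simp
  | tmul x y => simp
  | add x y hx hy => simp only [map_add, hx, hy]

lemma lid_map {M' N' : Type} [AddCommGroup M'] [Module k M'] [AddCommGroup N'] [Module k N']
    (f : M →ₗ[k] M') (h : N →ₗ[k] N') (φ : M' →ₗ[k] k) (t : M ⊗[k] N) :
    TensorProduct.lid k N' (TensorProduct.map φ LinearMap.id (TensorProduct.map f h t)) =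
      h (TensorProduct.lid k N (TensorProduct.map (φ ∘ₗ f) LinearMap.id t)) := by
  induction t with
  | zero => simp
  | tmul x y => simp
  | add x y hx hy => simp only [map_add, hx, hy]

lemma eq_zero_of_rid (t : M ⊗[k] N)
    (h : ∀ φ : N →ₗ[k] k, TensorProduct.rid k M (TensorProduct.map LinearMap.id φ t) = 0) :
    t = 0 := by
  classical
  let b := Module.Basis.ofVectorSpace k N
  apply (TensorProduct.equivFinsuppOfBasisRight (M := M) b).injective
  rw [map_zero]
  ext i
  rw [TensorProduct.equivFinsuppOfBasisRight_apply]
  exact h (b.coord i)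

lemma eq_zero_of_lid (t : M ⊗[k] N)
    (h : ∀ φ : M →ₗ[k] k, TensorProduct.lid k N (TensorProduct.map φ LinearMap.id t) = 0) :
    t = 0 := by
  classical
  let b := Module.Basis.ofVectorSpace k M
  apply (TensorProduct.equivFinsuppOfBasisLeft (N := N) b).injective
  rw [map_zero]
  ext i
  rw [TensorProduct.equivFinsuppOfBasisLeft_apply]
  exact h (b.coord i)

/-- Over a field, a tensor lies in `D ⊗ D` as soon as all its slices lie in `D`. -/
lemma mem_range_map_subtype {D : Submodule k M} {t : M ⊗[k] M}
    (hr : ∀ φ : M →ₗ[k] k, TensorProduct.rid k M (TensorProduct.map LinearMap.id φ t) ∈ D)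
    (hl : ∀ φ : M →ₗ[k] k, TensorProduct.lid k M (TensorProduct.map φ LinearMap.id t) ∈ D) :
    t ∈ LinearMap.range (TensorProduct.map D.subtype D.subtype) := by
  obtain ⟨p, hp⟩ := LinearMap.exists_leftInverse_of_injective D.subtype D.ker_subtype
  have hpD : ∀ d ∈ D, (D.subtype ∘ₗ p) d = d := by
    intro d hd
    have := LinearMap.congr_fun hp ⟨d, hd⟩
    simpa using congrArg Subtype.val this
  have h1 : TensorProduct.map (D.subtype ∘ₗ p) LinearMap.id t = t := by
    rw [← sub_eq_zero]
    refine eq_zero_of_rid _ fun φ => ?_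
    rw [map_sub, map_sub, rid_map, LinearMap.comp_id, hpD _ (hr φ), sub_self]
  have h2 : TensorProduct.map LinearMap.id (D.subtype ∘ₗ p) t = t := by
    rw [← sub_eq_zero]
    refine eq_zero_of_lid _ fun φ => ?_
    rw [map_sub, map_sub, lid_map, LinearMap.comp_id, hpD _ (hl φ), sub_self]
  refine ⟨TensorProduct.map p p t, ?_⟩
  conv_rhs => rw [← h1, ← h2]
  rw [← LinearMap.comp_apply, ← LinearMap.comp_apply, ← TensorProduct.map_comp,
    ← TensorProduct.map_comp, LinearMap.id_comp, LinearMap.comp_id]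

/-- Subcoalgebras are the same as sub-bimodules over the dual. -/
lemma isSubcoalgebraOf_iff (Δ : M →ₗ[k] M ⊗[k] M) (D : Submodule k M) :
    IsSubcoalgebraOf Δ D ↔ StableUnder (dualOps Δ) D := by
  constructor
  · rintro h f (⟨φ, rfl⟩ | ⟨φ, rfl⟩) d hd <;> obtain ⟨u, hu⟩ := h d hd
    · change TensorProduct.rid k M (TensorProduct.map LinearMap.id φ (Δ d)) ∈ D
      rw [← hu, rid_map]
      exact Subtype.property _
    · change TensorProduct.lid k M (TensorProduct.map φ LinearMap.id (Δ d)) ∈ D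
      rw [← hu, lid_map]
      exact Subtype.property _
  · exact fun h d hd => mem_range_map_subtype (fun φ => h _ (Or.inl ⟨φ, rfl⟩) d hd)
      (fun φ => h _ (Or.inr ⟨φ, rfl⟩) d hd)

lemma coradicalOf_eq (Δ : M →ₗ[k] M ⊗[k] M) {S : Set (M →ₗ[k] M)}
    (hS : ∀ D, IsSubcoalgebraOf Δ D ↔ StableUnder S D) : coradicalOf Δ = opSocle S := by
  simp only [coradicalOf, opSocle, IsMinStable, hS]

@[simp] lemma opL_add (Δ : M →ₗ[k] M ⊗[k] M) (φ ψ : M →ₗ[k] k) :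
    opL Δ (φ + ψ) = opL Δ φ + opL Δ ψ := by
  simp [opL, TensorProduct.map_add_right, LinearMap.add_comp, LinearMap.comp_add]

@[simp] lemma opL_neg (Δ : M →ₗ[k] M ⊗[k] M) (φ : M →ₗ[k] k) : opL Δ (-φ) = -opL Δ φ := by
  rw [eq_neg_iff_add_eq_zero, ← opL_add, neg_add_cancel]
  simp [opL]

@[simp] lemma opR_add (Δ : M →ₗ[k] M ⊗[k] M) (φ ψ : M →ₗ[k] k) :
    opR Δ (φ + ψ) = opR Δ φ + opR Δ ψ := by
  simp [opR, TensorProduct.map_add_left, LinearMap.add_comp, LinearMap.comp_add]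

@[simp] lemma opR_zero (Δ : M →ₗ[k] M ⊗[k] M) : opR Δ 0 = 0 := by
  simp [opR]

@[simp] lemma opR_neg (Δ : M →ₗ[k] M ⊗[k] M) (φ : M →ₗ[k] k) : opR Δ (-φ) = -opR Δ φ := by
  rw [eq_neg_iff_add_eq_zero, ← opR_add, neg_add_cancel, opR_zero]

end DualAction

/-! ### Super-coalgebras and the comultiplication of the smash product -/

namespace SuperCoalgebra

variable {k : Type} [Field k] (C : SuperCoalgebra k)

/-- The parity automorphism `c ↦ (-1)^|c| c`. -/
def par : C.carrier →ₗ[k] C.carrier := C.pe - C.po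

lemma pe_pe (a : C.carrier) : C.pe (C.pe a) = C.pe a := by
  have := congrArg C.pe (C.pe_add_po a)
  rwa [map_add, C.pe_po, add_zero] at this

lemma po_po (a : C.carrier) : C.po (C.po a) = C.po a := by
  have := congrArg C.po (C.pe_add_po a)
  rwa [map_add, C.po_pe, zero_add] at this

lemma par_pe : C.par ∘ₗ C.pe = C.pe := by
  ext a; simp [par, C.pe_pe, C.po_pe]

lemma par_po : C.par ∘ₗ C.po = -C.po := by
  ext a; simp [par, C.po_po, C.pe_po]

lemma pe_par : C.pe ∘ₗ C.par = C.pe := by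
  ext a; simp [par, C.pe_pe, C.pe_po]

lemma po_par : C.po ∘ₗ C.par = -C.po := by
  ext a; simp [par, C.po_po, C.po_pe]

lemma par_par (a : C.carrier) : C.par (C.par a) = a := by
  simp [par, C.pe_pe, C.po_po, C.pe_po, C.po_pe, C.pe_add_po]

lemma comul_par (a : C.carrier) :
    C.comul (C.par a) = TensorProduct.map C.par C.par (C.comul a) := by
  have he := C.comul_even (C.pe a) (C.po_pe a)
  have ho := C.comul_odd (C.po a) (C.pe_po a)
  have he' : TensorProduct.map C.par C.par (C.comul (C.pe a)) = C.comul (C.pe a) := by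
    rw [he, map_add]
    simp only [TensorProduct.map_map, par_pe, par_po]
    rw [← neg_one_smul k C.po, TensorProduct.map_smul_left, TensorProduct.map_smul_right]
    simp
  have ho' : TensorProduct.map C.par C.par (C.comul (C.po a)) = -C.comul (C.po a) := by
    rw [ho, map_add]
    simp only [TensorProduct.map_map, par_pe, par_po]
    rw [← neg_one_smul k C.po, TensorProduct.map_smul_left, TensorProduct.map_smul_right]
    simp [add_comm]
  have ha : C.comul a = C.comul (C.pe a) + C.comul (C.po a) := by
    rw [← map_add, C.pe_add_po]
  rw [ha, map_add, he', ho', par, LinearMap.sub_apply, map_sub, sub_eq_add_neg]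

lemma par_opL_par (φ : C.carrier →ₗ[k] k) (a : C.carrier) :
    C.par (opL C.comul φ (C.par a)) = opL C.comul (φ ∘ₗ C.par) a := by
  simp only [opL, LinearMap.comp_apply, LinearEquiv.coe_coe]
  rw [comul_par, rid_map, par_par]

lemma par_opR_par (φ : C.carrier →ₗ[k] k) (a : C.carrier) :
    C.par (opR C.comul φ (C.par a)) = opR C.comul (φ ∘ₗ C.par) a := by
  simp only [opR, LinearMap.comp_apply, LinearEquiv.coe_coe]
  rw [comul_par, lid_map, par_par]

lemma opL_counit (a : C.carrier) : opL C.comul C.counit a = a := C.comul_counit a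

lemma opR_counit (a : C.carrier) : opR C.comul C.counit a = a := C.counit_comul a

lemma counit_po : C.counit ∘ₗ C.po = 0 := by
  ext a; exact C.counit_odd _ (C.pe_po a)

lemma counit_pe : C.counit ∘ₗ C.pe = C.counit := by
  ext a
  have h := LinearMap.congr_fun C.counit_po a
  conv_rhs => rw [← C.pe_add_po a, map_add]
  simpa using h

lemma sum_zmod_two {A : Type} [AddCommMonoid A] (f : ZMod 2 → A) : ∑ i, f i = f 0 + f 1 :=
  Fin.sum_univ_two f

/-- The inclusion `c ↦ i ⊗ c` into the smash coproduct. -/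
abbrev inc (i : ZMod 2) : C.carrier →ₗ[k] (ZMod 2 → C.carrier) :=
  LinearMap.single k (fun _ : ZMod 2 => C.carrier) i

/-- The coordinate `Σ i ⊗ hᵢ ↦ hᵢ` of the smash coproduct. -/
abbrev coo (i : ZMod 2) : (ZMod 2 → C.carrier) →ₗ[k] C.carrier :=
  LinearMap.proj i

lemma opL_smash (Φ : (ZMod 2 → C.carrier) →ₗ[k] k) (h : ZMod 2 → C.carrier) :
    opL C.smashComul Φ h = ∑ i : ZMod 2, ∑ p : ZMod 2,
      C.inc i (C.parityProj p (opL C.comul (Φ ∘ₗ C.inc (p + i)) (h i))) := by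
  simp only [opL, smashComul, LinearMap.comp_apply, LinearMap.sum_apply, map_sum,
    LinearEquiv.coe_coe, rid_map, LinearMap.proj_apply]

lemma opR_smash (Φ : (ZMod 2 → C.carrier) →ₗ[k] k) (h : ZMod 2 → C.carrier) :
    opR C.smashComul Φ h = ∑ i : ZMod 2, ∑ p : ZMod 2,
      C.inc (p + i) (opR C.comul (Φ ∘ₗ C.inc i ∘ₗ C.parityProj p) (h i)) := by
  simp only [opR, smashComul, LinearMap.comp_apply, LinearMap.sum_apply, map_sum,
    LinearEquiv.coe_coe, lid_map, LinearMap.proj_apply]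

lemma one_add_one_zmod : (1 : ZMod 2) + 1 = 0 := rfl

lemma parityProj_zero : C.parityProj 0 = C.pe := by simp [parityProj]

lemma parityProj_one : C.parityProj 1 = C.po := by simp [parityProj]

lemma opL_smash_zero (Φ : (ZMod 2 → C.carrier) →ₗ[k] k) (h : ZMod 2 → C.carrier) :
    opL C.smashComul Φ h 0 = C.pe (opL C.comul (Φ ∘ₗ C.inc 0) (h 0)) +
      C.po (opL C.comul (Φ ∘ₗ C.inc 1) (h 0)) := by
  rw [opL_smash]
  simp [sum_zmod_two, one_add_one_zmod, parityProj_zero, parityProj_one]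

lemma opL_smash_one (Φ : (ZMod 2 → C.carrier) →ₗ[k] k) (h : ZMod 2 → C.carrier) :
    opL C.smashComul Φ h 1 = C.pe (opL C.comul (Φ ∘ₗ C.inc 1) (h 1)) +
      C.po (opL C.comul (Φ ∘ₗ C.inc 0) (h 1)) := by
  rw [opL_smash]
  simp [sum_zmod_two, one_add_one_zmod, parityProj_zero, parityProj_one]

lemma opR_smash_zero (Φ : (ZMod 2 → C.carrier) →ₗ[k] k) (h : ZMod 2 → C.carrier) :
    opR C.smashComul Φ h 0 = opR C.comul ((Φ ∘ₗ C.inc 0) ∘ₗ C.pe) (h 0) +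
      opR C.comul ((Φ ∘ₗ C.inc 1) ∘ₗ C.po) (h 1) := by
  rw [opR_smash]
  simp [sum_zmod_two, one_add_one_zmod, parityProj_zero, parityProj_one, LinearMap.comp_assoc]

lemma opR_smash_one (Φ : (ZMod 2 → C.carrier) →ₗ[k] k) (h : ZMod 2 → C.carrier) :
    opR C.smashComul Φ h 1 = opR C.comul ((Φ ∘ₗ C.inc 0) ∘ₗ C.po) (h 0) +
      opR C.comul ((Φ ∘ₗ C.inc 1) ∘ₗ C.pe) (h 1) := by
  rw [opR_smash]
  simp [sum_zmod_two, one_add_one_zmod, parityProj_zero, parityProj_one, LinearMap.comp_assoc]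

lemma smash_ext {x y : ZMod 2 → C.carrier} (h0 : x 0 = y 0) (h1 : x 1 = y 1) : x = y := by
  funext i
  fin_cases i
  · exact h0
  · exact h1

/-! ### Subcoalgebras of the smash product -/

/-- The coalgebra morphism `i ⊗ c ↦ c` from the smash product to `C`. -/
def fold : (ZMod 2 → C.carrier) →ₗ[k] C.carrier := C.coo 0 + C.coo 1

/-- The automorphism `i ⊗ c ↦ (-1)^|c| i ⊗ c` of the smash product. -/
def smashPar : (ZMod 2 → C.carrier) →ₗ[k] (ZMod 2 → C.carrier) :=
  LinearMap.pi fun i => C.par ∘ₗ C.coo i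

/-- The map `i ⊗ c ↦ (-1)^i i ⊗ c` of the smash product. -/
def smashSgn : (ZMod 2 → C.carrier) →ₗ[k] (ZMod 2 → C.carrier) :=
  C.inc 0 ∘ₗ C.coo 0 - C.inc 1 ∘ₗ C.coo 1

/-- The operators on the smash product given by functionals on `C`, pulled back along `fold`. -/
def foldOps : Set ((ZMod 2 → C.carrier) →ₗ[k] (ZMod 2 → C.carrier)) :=
  Set.range (fun φ : C.carrier →ₗ[k] k => opL C.smashComul (φ ∘ₗ C.fold)) ∪
    Set.range (fun φ : C.carrier →ₗ[k] k => opR C.smashComul (φ ∘ₗ C.fold))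

@[simp] lemma smashPar_apply (h : ZMod 2 → C.carrier) (i : ZMod 2) :
    C.smashPar h i = C.par (h i) := rfl

@[simp] lemma smashSgn_zero (h : ZMod 2 → C.carrier) : C.smashSgn h 0 = h 0 := by
  simp [smashSgn]

@[simp] lemma smashSgn_one (h : ZMod 2 → C.carrier) : C.smashSgn h 1 = -h 1 := by
  simp [smashSgn]

lemma comp_par_pe (φ : C.carrier →ₗ[k] k) : (φ ∘ₗ C.par) ∘ₗ C.pe = φ ∘ₗ C.pe := by
  rw [LinearMap.comp_assoc, par_pe]

lemma comp_par_po (φ : C.carrier →ₗ[k] k) : (φ ∘ₗ C.par) ∘ₗ C.po = -(φ ∘ₗ C.po) := by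
  rw [LinearMap.comp_assoc, par_po, LinearMap.comp_neg]

lemma comp_pe_par (φ : C.carrier →ₗ[k] k) : (φ ∘ₗ C.pe) ∘ₗ C.par = φ ∘ₗ C.pe := by
  rw [LinearMap.comp_assoc, pe_par]

lemma comp_po_par (φ : C.carrier →ₗ[k] k) : (φ ∘ₗ C.po) ∘ₗ C.par = -(φ ∘ₗ C.po) := by
  rw [LinearMap.comp_assoc, po_par, LinearMap.comp_neg]

lemma fold_inc_zero : C.fold ∘ₗ C.inc 0 = LinearMap.id := by
  ext a; simp [fold]

lemma fold_inc_one : C.fold ∘ₗ C.inc 1 = LinearMap.id := by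
  ext a; simp [fold]

lemma opL_fold_zero (φ : C.carrier →ₗ[k] k) (h : ZMod 2 → C.carrier) :
    opL C.smashComul (φ ∘ₗ C.fold) h 0 = opL C.comul φ (h 0) := by
  rw [opL_smash_zero, LinearMap.comp_assoc, LinearMap.comp_assoc, fold_inc_zero, fold_inc_one,
    LinearMap.comp_id, C.pe_add_po]

lemma opL_fold_one (φ : C.carrier →ₗ[k] k) (h : ZMod 2 → C.carrier) :
    opL C.smashComul (φ ∘ₗ C.fold) h 1 = opL C.comul φ (h 1) := by
  rw [opL_smash_one, LinearMap.comp_assoc, LinearMap.comp_assoc, fold_inc_zero, fold_inc_one,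
    LinearMap.comp_id, C.pe_add_po]

lemma opR_fold_zero (φ : C.carrier →ₗ[k] k) (h : ZMod 2 → C.carrier) :
    opR C.smashComul (φ ∘ₗ C.fold) h 0 =
      opR C.comul (φ ∘ₗ C.pe) (h 0) + opR C.comul (φ ∘ₗ C.po) (h 1) := by
  rw [opR_smash_zero, LinearMap.comp_assoc (C.inc 0), LinearMap.comp_assoc (C.inc 1),
    fold_inc_zero, fold_inc_one,
    LinearMap.comp_id]

lemma opR_fold_one (φ : C.carrier →ₗ[k] k) (h : ZMod 2 → C.carrier) :
    opR C.smashComul (φ ∘ₗ C.fold) h 1 =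
      opR C.comul (φ ∘ₗ C.po) (h 0) + opR C.comul (φ ∘ₗ C.pe) (h 1) := by
  rw [opR_smash_one, LinearMap.comp_assoc (C.inc 0), LinearMap.comp_assoc (C.inc 1),
    fold_inc_zero, fold_inc_one,
    LinearMap.comp_id]

lemma smashPar_smashPar (h : ZMod 2 → C.carrier) : C.smashPar (C.smashPar h) = h :=
  funext fun i => C.par_par (h i)

lemma smashSgn_smashSgn (h : ZMod 2 → C.carrier) : C.smashSgn (C.smashSgn h) = h :=
  C.smash_ext (by simp) (by simp)

lemma smashPar_conj : ∀ s ∈ C.foldOps, ∃ t ∈ C.foldOps, ∀ v,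
    C.smashPar (s (C.smashPar v)) = t v := by
  rintro _ (⟨φ, rfl⟩ | ⟨φ, rfl⟩)
  · refine ⟨_, Or.inl ⟨φ ∘ₗ C.par, rfl⟩, fun v => C.smash_ext ?_ ?_⟩
    · simp [opL_fold_zero, par_opL_par]
    · simp [opL_fold_one, par_opL_par]
  · refine ⟨_, Or.inr ⟨φ ∘ₗ C.par, rfl⟩, fun v => C.smash_ext ?_ ?_⟩
    · simp [opR_fold_zero, par_opR_par, comp_par_pe, comp_par_po, comp_pe_par, comp_po_par]
    · simp [opR_fold_one, par_opR_par, comp_par_pe, comp_par_po, comp_pe_par, comp_po_par]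

lemma smashSgn_conj : ∀ s ∈ insert C.smashPar C.foldOps, ∃ t ∈ insert C.smashPar C.foldOps, ∀ v,
    C.smashSgn (s (C.smashSgn v)) = t v := by
  rintro _ (rfl | ⟨φ, rfl⟩ | ⟨φ, rfl⟩)
  · exact ⟨_, Set.mem_insert _ _, fun v => C.smash_ext (by simp) (by simp)⟩
  · refine ⟨_, Or.inr (Or.inl ⟨φ, rfl⟩), fun v => C.smash_ext ?_ ?_⟩
    · simp [opL_fold_zero]
    · simp [opL_fold_one]
  · refine ⟨_, Or.inr (Or.inr ⟨φ ∘ₗ C.par, rfl⟩), fun v => C.smash_ext ?_ ?_⟩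
    · simp [opR_fold_zero, comp_par_pe, comp_par_po]
    · simp [opR_fold_one, comp_par_pe, comp_par_po, add_comm]

lemma opR_sgn (h : ZMod 2 → C.carrier) :
    opR C.smashComul (C.counit ∘ₗ C.fold ∘ₗ C.smashSgn) h = C.smashSgn h := by
  have h0 : (C.counit ∘ₗ C.fold ∘ₗ C.smashSgn) ∘ₗ C.inc 0 = C.counit := by
    ext a; simp [fold]
  have h1 : (C.counit ∘ₗ C.fold ∘ₗ C.smashSgn) ∘ₗ C.inc 1 = -C.counit := by
    ext a; simp [fold]
  refine C.smash_ext ?_ ?_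
  · rw [opR_smash_zero, h0, h1]
    simp [counit_pe, counit_po, opR_counit]
  · rw [opR_smash_one, h0, h1]
    simp [counit_pe, counit_po, opR_counit]

lemma opL_sgn (h : ZMod 2 → C.carrier) :
    opL C.smashComul (C.counit ∘ₗ C.fold ∘ₗ C.smashSgn) h = C.smashSgn (C.smashPar h) := by
  have h0 : (C.counit ∘ₗ C.fold ∘ₗ C.smashSgn) ∘ₗ C.inc 0 = C.counit := by
    ext a; simp [fold]
  have h1 : (C.counit ∘ₗ C.fold ∘ₗ C.smashSgn) ∘ₗ C.inc 1 = -C.counit := by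
    ext a; simp [fold]
  refine C.smash_ext ?_ ?_
  · rw [opL_smash_zero, h0, h1]
    simp [opL_counit, par, sub_eq_add_neg]
  · rw [opL_smash_one, h0, h1]
    simp [opL_counit, par, sub_eq_add_neg, add_comm]

/-- A functional on the smash product is the sum of its restrictions to the two copies of `C`,
so its left action is a combination of `foldOps` and the projections to the eigenspaces
of `smashSgn * smashPar`. -/
lemma opL_smash_eq (Φ : (ZMod 2 → C.carrier) →ₗ[k] k) (h : ZMod 2 → C.carrier) :
    (2 : k) • opL C.smashComul Φ h =
      (opL C.smashComul ((Φ ∘ₗ C.inc 0) ∘ₗ C.fold) h +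
        C.smashSgn (C.smashPar (opL C.smashComul ((Φ ∘ₗ C.inc 0) ∘ₗ C.fold) h))) +
      (opL C.smashComul ((Φ ∘ₗ C.inc 1) ∘ₗ C.fold) h -
        C.smashSgn (C.smashPar (opL C.smashComul ((Φ ∘ₗ C.inc 1) ∘ₗ C.fold) h))) := by
  have hpe : ∀ a, a + C.par a = (2 : k) • C.pe a := by
    intro a
    nth_rewrite 1 [← C.pe_add_po a]
    simp only [par, LinearMap.sub_apply, two_smul]
    abel
  have hpo : ∀ a, a - C.par a = (2 : k) • C.po a := by
    intro a
    nth_rewrite 1 [← C.pe_add_po a]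
    simp only [par, LinearMap.sub_apply, two_smul]
    abel
  refine C.smash_ext ?_ ?_
  · simp [opL_smash_zero C Φ, opL_fold_zero, hpe, hpo]
  · simp [opL_smash_one C Φ, opL_fold_one, hpe, hpo, ← sub_eq_add_neg, add_comm]

lemma opR_smash_eq (Φ : (ZMod 2 → C.carrier) →ₗ[k] k) (h : ZMod 2 → C.carrier) :
    (2 : k) • opR C.smashComul Φ h =
      opR C.smashComul ((Φ ∘ₗ C.inc 0) ∘ₗ C.fold) (h + C.smashSgn h) +
      opR C.smashComul ((Φ ∘ₗ C.inc 1) ∘ₗ C.fold) (h - C.smashSgn h) := by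
  refine C.smash_ext ?_ ?_
  · simp [opR_smash_zero C Φ, opR_fold_zero, two_smul]
    abel
  · simp [opR_smash_one C Φ, opR_fold_one, two_smul]
    abel

/-- The dual algebra of the smash product is generated by the dual of `C` and one involution. Its
left and right actions on the smash product therefore amount to `foldOps` together with the
involutions `smashSgn * smashPar` and `smashSgn`. -/
lemma isSubcoalgebraOf_smash_iff (h2 : (2 : k) ≠ 0) (D : Submodule k (ZMod 2 → C.carrier)) :
    IsSubcoalgebraOf C.smashComul D ↔
      StableUnder (insert C.smashSgn (insert C.smashPar C.foldOps)) D := by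
  rw [isSubcoalgebraOf_iff, stableUnder_insert, stableUnder_insert]
  constructor
  · intro h
    have hs : ∀ d ∈ D, C.smashSgn d ∈ D := fun d hd => by
      rw [← opR_sgn]
      exact h _ (Or.inr ⟨_, rfl⟩) d hd
    refine ⟨hs, fun d hd => ?_, ?_⟩
    · rw [← C.smashSgn_smashSgn (C.smashPar d), ← opL_sgn]
      exact hs _ (h _ (Or.inl ⟨_, rfl⟩) d hd)
    · rintro _ (⟨φ, rfl⟩ | ⟨φ, rfl⟩) d hd
      · exact h _ (Or.inl ⟨_, rfl⟩) d hd
      · exact h _ (Or.inr ⟨_, rfl⟩) d hd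
  · rintro ⟨hs, hp, h⟩ _ (⟨Φ, rfl⟩ | ⟨Φ, rfl⟩) d hd
    · have hL : ∀ φ : C.carrier →ₗ[k] k, opL C.smashComul (φ ∘ₗ C.fold) d ∈ D :=
        fun φ => h _ (Or.inl ⟨φ, rfl⟩) d hd
      rw [← Submodule.smul_mem_iff _ h2, opL_smash_eq]
      exact add_mem (add_mem (hL _) (hs _ (hp _ (hL _)))) (sub_mem (hL _) (hs _ (hp _ (hL _))))
    · rw [← Submodule.smul_mem_iff _ h2, opR_smash_eq]
      exact add_mem (h _ (Or.inr ⟨_, rfl⟩) _ (add_mem hd (hs d hd)))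
        (h _ (Or.inr ⟨_, rfl⟩) _ (sub_mem hd (hs d hd)))

/-! ### The smash product as a bimodule over the dual of `C` -/

/-- The map `i ⊗ c ↦ (-1)^i c`, complementary to `fold`. -/
def altFold : (ZMod 2 → C.carrier) →ₗ[k] C.carrier := C.coo 0 - C.coo 1

/-- The embedding `c ↦ 0 ⊗ c + 1 ⊗ c`. -/
def diag : C.carrier →ₗ[k] (ZMod 2 → C.carrier) := C.inc 0 + C.inc 1

/-- The embedding `c ↦ 0 ⊗ c - 1 ⊗ c`. -/
def altDiag : C.carrier →ₗ[k] (ZMod 2 → C.carrier) := C.inc 0 - C.inc 1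

lemma opR_pe_add_po (φ : C.carrier →ₗ[k] k) (a : C.carrier) :
    opR C.comul (φ ∘ₗ C.pe) a + opR C.comul (φ ∘ₗ C.po) a = opR C.comul φ a := by
  rw [← LinearMap.add_apply, ← opR_add, ← LinearMap.comp_add]
  congr 2
  ext x
  simp [C.pe_add_po]

lemma opR_par_eq (φ : C.carrier →ₗ[k] k) (a : C.carrier) :
    opR C.comul (φ ∘ₗ C.par) a = opR C.comul (φ ∘ₗ C.pe) a - opR C.comul (φ ∘ₗ C.po) a := by
  rw [par, LinearMap.comp_sub, sub_eq_add_neg, opR_add, opR_neg, LinearMap.add_apply,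
    LinearMap.neg_apply, sub_eq_add_neg]

lemma fold_opL (φ : C.carrier →ₗ[k] k) (h : ZMod 2 → C.carrier) :
    C.fold (opL C.smashComul (φ ∘ₗ C.fold) h) = opL C.comul φ (C.fold h) := by
  change opL C.smashComul (φ ∘ₗ C.fold) h 0 + opL C.smashComul (φ ∘ₗ C.fold) h 1 =
    opL C.comul φ (h 0 + h 1)
  rw [opL_fold_zero, opL_fold_one, map_add]

lemma fold_opR (φ : C.carrier →ₗ[k] k) (h : ZMod 2 → C.carrier) :
    C.fold (opR C.smashComul (φ ∘ₗ C.fold) h) = opR C.comul φ (C.fold h) := by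
  change opR C.smashComul (φ ∘ₗ C.fold) h 0 + opR C.smashComul (φ ∘ₗ C.fold) h 1 =
    opR C.comul φ (h 0 + h 1)
  rw [opR_fold_zero, opR_fold_one, map_add, ← opR_pe_add_po C φ (h 0), ← opR_pe_add_po C φ (h 1)]
  abel

lemma altFold_opL (φ : C.carrier →ₗ[k] k) (h : ZMod 2 → C.carrier) :
    C.altFold (opL C.smashComul (φ ∘ₗ C.fold) h) = opL C.comul φ (C.altFold h) := by
  simp [altFold, opL_fold_zero, opL_fold_one]

lemma altFold_opR (φ : C.carrier →ₗ[k] k) (h : ZMod 2 → C.carrier) :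
    C.altFold (opR C.smashComul (φ ∘ₗ C.fold) h) = opR C.comul (φ ∘ₗ C.par) (C.altFold h) := by
  change opR C.smashComul (φ ∘ₗ C.fold) h 0 - opR C.smashComul (φ ∘ₗ C.fold) h 1 =
    opR C.comul (φ ∘ₗ C.par) (h 0 - h 1)
  rw [opR_fold_zero, opR_fold_one, map_sub, opR_par_eq, opR_par_eq]
  abel

lemma diag_opL (φ : C.carrier →ₗ[k] k) (a : C.carrier) :
    opL C.smashComul (φ ∘ₗ C.fold) (C.diag a) = C.diag (opL C.comul φ a) :=
  C.smash_ext (by simp [opL_fold_zero, diag]) (by simp [opL_fold_one, diag])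

lemma diag_opR (φ : C.carrier →ₗ[k] k) (a : C.carrier) :
    opR C.smashComul (φ ∘ₗ C.fold) (C.diag a) = C.diag (opR C.comul φ a) :=
  C.smash_ext (by simp [opR_fold_zero, diag, opR_pe_add_po])
    (by simp [opR_fold_one, diag, add_comm, opR_pe_add_po])

lemma altDiag_opL (φ : C.carrier →ₗ[k] k) (a : C.carrier) :
    opL C.smashComul (φ ∘ₗ C.fold) (C.altDiag a) = C.altDiag (opL C.comul φ a) :=
  C.smash_ext (by simp [opL_fold_zero, altDiag]) (by simp [opL_fold_one, altDiag])

lemma altDiag_opR (φ : C.carrier →ₗ[k] k) (a : C.carrier) :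
    opR C.smashComul (φ ∘ₗ C.fold) (C.altDiag a) = C.altDiag (opR C.comul (φ ∘ₗ C.par) a) :=
  C.smash_ext (by simp [opR_fold_zero, altDiag, opR_par_eq, sub_eq_add_neg])
    (by simp [opR_fold_one, altDiag, opR_par_eq, sub_eq_add_neg, add_comm])

lemma comp_par_par (φ : C.carrier →ₗ[k] k) : (φ ∘ₗ C.par) ∘ₗ C.par = φ := by
  ext a; simp [par_par]

lemma fold_mem {h : ZMod 2 → C.carrier} (hh : h ∈ opSocle C.foldOps) :
    C.fold h ∈ opSocle (dualOps C.comul) := by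
  refine opSocle_map ?_ ?_ hh
  · rintro _ (⟨φ, rfl⟩ | ⟨φ, rfl⟩)
    · exact ⟨_, Or.inl ⟨φ, rfl⟩, fun v => (C.fold_opL φ v).symm⟩
    · exact ⟨_, Or.inr ⟨φ, rfl⟩, fun v => (C.fold_opR φ v).symm⟩
  · rintro _ (⟨φ, rfl⟩ | ⟨φ, rfl⟩)
    · exact ⟨_, Or.inl ⟨φ, rfl⟩, fun v => C.fold_opL φ v⟩
    · exact ⟨_, Or.inr ⟨φ, rfl⟩, fun v => C.fold_opR φ v⟩

lemma altFold_mem {h : ZMod 2 → C.carrier} (hh : h ∈ opSocle C.foldOps) :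
    C.altFold h ∈ opSocle (dualOps C.comul) := by
  refine opSocle_map ?_ ?_ hh
  · rintro _ (⟨φ, rfl⟩ | ⟨φ, rfl⟩)
    · exact ⟨_, Or.inl ⟨φ, rfl⟩, fun v => (C.altFold_opL φ v).symm⟩
    · exact ⟨_, Or.inr ⟨φ ∘ₗ C.par, rfl⟩, fun v => by
        simpa only [comp_par_par] using (C.altFold_opR (φ ∘ₗ C.par) v).symm⟩
  · rintro _ (⟨φ, rfl⟩ | ⟨φ, rfl⟩)
    · exact ⟨_, Or.inl ⟨φ, rfl⟩, fun v => C.altFold_opL φ v⟩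
    · exact ⟨_, Or.inr ⟨φ ∘ₗ C.par, rfl⟩, fun v => C.altFold_opR φ v⟩

lemma diag_mem {a : C.carrier} (ha : a ∈ opSocle (dualOps C.comul)) :
    C.diag a ∈ opSocle C.foldOps := by
  refine opSocle_map ?_ ?_ ha
  · rintro _ (⟨φ, rfl⟩ | ⟨φ, rfl⟩)
    · exact ⟨_, Or.inl ⟨φ, rfl⟩, fun v => C.diag_opL φ v⟩
    · exact ⟨_, Or.inr ⟨φ, rfl⟩, fun v => C.diag_opR φ v⟩
  · rintro _ (⟨φ, rfl⟩ | ⟨φ, rfl⟩)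
    · exact ⟨_, Or.inl ⟨φ, rfl⟩, fun v => (C.diag_opL φ v).symm⟩
    · exact ⟨_, Or.inr ⟨φ, rfl⟩, fun v => (C.diag_opR φ v).symm⟩

lemma altDiag_mem {a : C.carrier} (ha : a ∈ opSocle (dualOps C.comul)) :
    C.altDiag a ∈ opSocle C.foldOps := by
  refine opSocle_map ?_ ?_ ha
  · rintro _ (⟨φ, rfl⟩ | ⟨φ, rfl⟩)
    · exact ⟨_, Or.inl ⟨φ, rfl⟩, fun v => C.altDiag_opL φ v⟩
    · exact ⟨_, Or.inr ⟨φ ∘ₗ C.par, rfl⟩, fun v => C.altDiag_opR φ v⟩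
  · rintro _ (⟨φ, rfl⟩ | ⟨φ, rfl⟩)
    · exact ⟨_, Or.inl ⟨φ, rfl⟩, fun v => (C.altDiag_opL φ v).symm⟩
    · exact ⟨_, Or.inr ⟨φ ∘ₗ C.par, rfl⟩, fun v => by
        simpa only [comp_par_par] using (C.altDiag_opR (φ ∘ₗ C.par) v).symm⟩

/-- As a bimodule over the dual of `C`, the smash product is the direct sum of `C` (embedded by
`diag`) and of `C` with one action twisted by parity (embedded by `altDiag`). -/
lemma mem_opSocle_foldOps (h2 : (2 : k) ≠ 0) (h : ZMod 2 → C.carrier) :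
    h ∈ opSocle C.foldOps ↔
      h 0 ∈ opSocle (dualOps C.comul) ∧ h 1 ∈ opSocle (dualOps C.comul) := by
  constructor
  · intro hh
    have hp : h 0 + h 1 ∈ _ := C.fold_mem hh
    have hm : h 0 - h 1 ∈ _ := C.altFold_mem hh
    constructor
    · rw [← Submodule.smul_mem_iff _ h2, two_smul, ← add_add_sub_cancel (h 0) (h 0) (h 1)]
      exact add_mem hp hm
    · rw [← Submodule.smul_mem_iff _ h2, two_smul, ← add_sub_sub_cancel (h 0) (h 1) (h 1)]
      exact sub_mem hp hm
  · rintro ⟨h0, h1⟩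
    rw [← Submodule.smul_mem_iff _ h2]
    have : (2 : k) • h = C.diag (h 0 + h 1) + C.altDiag (h 0 - h 1) := by
      refine C.smash_ext ?_ ?_
      · simp [diag, altDiag, two_smul]
      · simp [diag, altDiag, two_smul]
        abel
    rw [this]
    exact add_mem (C.diag_mem (add_mem h0 h1)) (C.altDiag_mem (sub_mem h0 h1))

end SuperCoalgebra

/-- Lemma 2.7: for a super-coalgebra `C` over a field of
characteristic `≠ 2`, the smash coproduct of `ℤ₂` with the coradical of `C`
equals the coradical of the smash coproduct: `ℤ₂ ⋉ Corad C = Corad (ℤ₂ ⋉ C)`.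
(Under the identification `kℤ₂ ⊗ C ≅ (ZMod 2 → C)`, the subcoalgebra
`ℤ₂ ⋉ Corad C` is the submodule of functions with values in `Corad C`.) -/
theorem smash_coradical
    (k : Type) [Field k] (hchar : ringChar k ≠ 2)
    (C : SuperCoalgebra k) :
    Submodule.pi Set.univ (fun _ : ZMod 2 => coradicalOf C.comul) =
      coradicalOf C.smashComul := by
  have h2 : (2 : k) ≠ 0 := Ring.two_ne_zero hchar
  rw [coradicalOf_eq _ (isSubcoalgebraOf_iff C.comul),
    coradicalOf_eq _ (C.isSubcoalgebraOf_smash_iff h2),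
    opSocle_insert h2 C.smashSgn_smashSgn C.smashSgn_conj,
    opSocle_insert h2 C.smashPar_smashPar C.smashPar_conj]
  ext h
  rw [C.mem_opSocle_foldOps h2, Submodule.mem_pi]
  refine ⟨fun hh => ⟨hh 0 trivial, hh 1 trivial⟩, fun hh i _ => ?_⟩
  fin_cases i
  · exact hh.1
  · exact hh.2

end
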